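/- arXiv:1901.02739 — 3 statements merged into one kernel-verified Lean document; each statement's English description precedes it below -/
import Mathlib

section
/- For every α > 0 and β > 0, the function a ↦ Γ(a) / β^a is differentiable at α with derivative β^{-α} (Γ'(α) − Γ(α) log β), and this derivative equals the convergent integral ∫_0^∞ x^{α−1} e^{−βx} log x dx; that is, d/dα [Γ(α)/β^α] = β^{-α}(Γ'(α) − Γ(α) log β) = ∫_0^∞ x^{α−1} e^{−βx} log x dx. -/
/-!
The integral `∫_0^∞ x^(a-1) e^(-βx) dx = Γ(a) / β^a` is the Mellin transform of `x ↦ e^(-βx)` at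
`a`. That function is bounded near `0` and decays faster than any power at infinity, so its Mellin
transform may be differentiated under the integral sign for `a > 0`, which brings down the factor
`log x`. The closed form of the derivative comes from the quotient rule, and the two agree by
uniqueness of derivatives.
-/

open MeasureTheory Set
open Filter Asymptotics Topology

section RealMellin

variable (f : ℝ → ℝ) (s : ℝ)

lemma eqOn_cpow_smul_ofReal :
    EqOn (fun x : ℝ => (x : ℂ) ^ ((s : ℂ) - 1) • (f x : ℂ))
      (fun x : ℝ => ((x ^ (s - 1) * f x : ℝ) : ℂ)) (Ioi 0) := by
  intro x hx
  simp [Complex.ofReal_cpow (le_of_lt hx)]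

lemma mellin_ofReal :
    mellin (fun x => (f x : ℂ)) s = ((∫ x in Ioi (0 : ℝ), x ^ (s - 1) * f x : ℝ) : ℂ) :=
  (setIntegral_congr_fun measurableSet_Ioi (eqOn_cpow_smul_ofReal f s)).trans
    integral_complex_ofReal

variable {f s}

lemma mellinConvergent_ofReal_iff :
    MellinConvergent (fun x => (f x : ℂ)) s ↔
      IntegrableOn (fun x => x ^ (s - 1) * f x) (Ioi 0) :=
  (integrableOn_congr_fun (eqOn_cpow_smul_ofReal f s) measurableSet_Ioi).trans
    ⟨Integrable.re, Integrable.ofReal⟩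

lemma hasDerivAt_integral_rpow_mul_of_isBigO_rpow {a b : ℝ}
    (hf : LocallyIntegrableOn f (Ioi 0)) (hf_top : f =O[atTop] (· ^ (-a))) (hs_top : s < a)
    (hf_bot : f =O[𝓝[>] 0] (· ^ (-b))) (hs_bot : b < s) :
    IntegrableOn (fun x => x ^ (s - 1) * f x * Real.log x) (Ioi 0) ∧
      HasDerivAt (fun t => ∫ x in Ioi (0 : ℝ), x ^ (t - 1) * f x)
        (∫ x in Ioi (0 : ℝ), x ^ (s - 1) * f x * Real.log x) s := by
  have hf_ofReal : LocallyIntegrableOn (fun x => (f x : ℂ)) (Ioi 0) := fun x hx =>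
    let ⟨u, hu, hfu⟩ := hf x hx
    ⟨u, hu, hfu.ofReal⟩
  obtain ⟨hconv, hderiv⟩ := mellin_hasDerivAt_of_isBigO_rpow (s := (s : ℂ)) hf_ofReal
    ((Complex.isBigO_ofReal_left).2 hf_top) hs_top ((Complex.isBigO_ofReal_left).2 hf_bot) hs_bot
  have hlog : (fun x => Real.log x • (f x : ℂ)) = fun x => ((f x * Real.log x : ℝ) : ℂ) := by
    ext x
    rw [Complex.real_smul, mul_comm, Complex.ofReal_mul]
  simp only [hlog, mellinConvergent_ofReal_iff, mellin_ofReal, ← mul_assoc] at hconv hderiv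
  refine ⟨hconv, ?_⟩
  simpa only [mellin_ofReal, Complex.ofReal_re] using hderiv.real_of_complex

end RealMellin

lemma hasDerivAt_integral_rpow_mul_exp_neg_mul {r s : ℝ} (hr : 0 < r) (hs : 0 < s) :
    IntegrableOn (fun x : ℝ => x ^ (s - 1) * Real.exp (-r * x) * Real.log x) (Ioi 0) ∧
      HasDerivAt (fun t => ∫ x in Ioi (0 : ℝ), x ^ (t - 1) * Real.exp (-r * x))
        (∫ x in Ioi (0 : ℝ), x ^ (s - 1) * Real.exp (-r * x) * Real.log x) s := by
  have hcont : Continuous fun x : ℝ => Real.exp (-r * x) := by fun_prop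
  have hbounded : (fun x : ℝ => Real.exp (-r * x)) =O[𝓝[>] 0] (· ^ (-(0 : ℝ))) := by
    simpa only [neg_zero, Real.rpow_zero] using hcont.continuousWithinAt.isBigO_one ℝ
  exact hasDerivAt_integral_rpow_mul_of_isBigO_rpow
    (hcont.locallyIntegrable.locallyIntegrableOn _)
    (isLittleO_exp_neg_mul_rpow_atTop hr _).isBigO (lt_add_one s) hbounded hs

lemma integral_rpow_mul_exp_neg_mul_eq_Gamma_div_rpow {r s : ℝ} (hr : 0 < r) (hs : 0 < s) :
    ∫ x in Ioi (0 : ℝ), x ^ (s - 1) * Real.exp (-r * x) = Real.Gamma s / r ^ s := by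
  simp only [neg_mul]
  rw [Real.integral_rpow_mul_exp_neg_mul_Ioi hs hr, Real.div_rpow zero_le_one hr.le,
    Real.one_rpow, one_div_mul_eq_div]

lemma hasDerivAt_div_const_rpow {f : ℝ → ℝ} {f' r s : ℝ} (hr : 0 < r) (hf : HasDerivAt f f' s) :
    HasDerivAt (fun a => f a / r ^ a) (r ^ (-s) * (f' - f s * Real.log r)) s := by
  have hpow : HasDerivAt (fun a : ℝ => r ^ a) (r ^ s * Real.log r) s :=
    (Real.hasStrictDerivAt_const_rpow hr s).hasDerivAt
  have hne : r ^ s ≠ 0 := (Real.rpow_pos_of_pos hr s).ne'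
  refine (hf.fun_div hpow hne).congr_deriv ?_
  rw [Real.rpow_neg hr.le]
  field_simp

/-- For `α, β > 0`, the map `a ↦ Γ(a) / β^a` is differentiable at `α` with derivative
`β^(-α) (Γ'(α) − Γ(α) log β)`, and this derivative equals the convergent integral
`∫_0^∞ x^(α−1) e^(−βx) log x dx`. -/
theorem hasDerivAt_gamma_div_rpow (α β : ℝ) (hα : 0 < α) (hβ : 0 < β) :
    HasDerivAt (fun a : ℝ => Real.Gamma a / β ^ a)
      (β ^ (-α) * (deriv Real.Gamma α - Real.Gamma α * Real.log β)) α ∧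
    IntegrableOn (fun x : ℝ => x ^ (α - 1) * Real.exp (-β * x) * Real.log x) (Ioi 0) ∧
    β ^ (-α) * (deriv Real.Gamma α - Real.Gamma α * Real.log β)
      = ∫ x in Ioi (0 : ℝ), x ^ (α - 1) * Real.exp (-β * x) * Real.log x := by
  have hΓ : HasDerivAt Real.Gamma (deriv Real.Gamma α) α :=
    (Real.differentiableOn_Gamma_Ioi.differentiableAt (Ioi_mem_nhds hα)).hasDerivAt
  have hquot := hasDerivAt_div_const_rpow hβ hΓ
  obtain ⟨hint, hderiv⟩ := hasDerivAt_integral_rpow_mul_exp_neg_mul hβ hα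
  have heq : (fun a => Real.Gamma a / β ^ a) =ᶠ[𝓝 α]
      fun a => ∫ x in Ioi (0 : ℝ), x ^ (a - 1) * Real.exp (-β * x) := by
    filter_upwards [Ioi_mem_nhds hα] with a ha
    exact (integral_rpow_mul_exp_neg_mul_eq_Gamma_div_rpow hβ ha).symm
  exact ⟨hquot, hint, hquot.unique (hderiv.congr_of_eventuallyEq heq)⟩
end

section
/- For all α > 0, α̂ > 0, and β > 0, ∫_0^∞ f(x; α̂, β) · log( f(x; α̂, β) / f(x; α, β) ) dx = log Γ(α) − log Γ(α̂) + (α̂ − α) ψ(α̂); that is, the KL divergence from the Gamma(α̂, β) distribution to the Gamma(α, β) distribution equals log Γ(α) − log Γ(α̂) + (α̂ − α)ψ(α̂), independently of β. -/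
/-!
The two densities have the same rate `β`, so on `(0, ∞)` their log-ratio is
`(αh - α) log (βx) + log Γ(α) - log Γ(αh)`, and only the mean of `log (βX)` for
`X ~ Gamma(αh, β)` is needed. Weighting the Gamma(a, r) density by
`exp (t log (rx)) = (rx)^t` gives `Γ(a + t) / Γ(a)` times the Gamma(a + t, r) density, so the
moment generating function of `log (rX)` is `t ↦ Γ(a + t) / Γ(a)` near `0`. Its derivative at `0`
is both the mean of `log (rX)` and `ψ(a)`.
-/

open MeasureTheory Set

/-- The Gamma(a, b) density: `f(x; a, b) = (b^a / Γ(a)) x^(a−1) e^(−bx)` for `x > 0`,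
and `0` otherwise. -/
noncomputable def gammaDensity (a b x : ℝ) : ℝ :=
  if 0 < x then (b ^ a / Real.Gamma a) * x ^ (a - 1) * Real.exp (-b * x) else 0

/-- The digamma function `ψ(a) = Γ'(a) / Γ(a)`. -/
noncomputable def digamma (a : ℝ) : ℝ := deriv Real.Gamma a / Real.Gamma a

open ProbabilityTheory Filter Topology

section Density

variable {a a' r t x : ℝ}

lemma gammaDensity_of_pos (hx : 0 < x) :
    gammaDensity a r x = r ^ a / Real.Gamma a * x ^ (a - 1) * Real.exp (-r * x) :=
  if_pos hx

lemma gammaDensity_of_nonpos (hx : x ≤ 0) : gammaDensity a r x = 0 :=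
  if_neg hx.not_gt

lemma gammaDensity_ae_eq_gammaPDFReal (a r : ℝ) :
    gammaDensity a r =ᵐ[volume] gammaPDFReal a r := by
  filter_upwards [Measure.ae_ne volume 0] with x hx
  simp only [gammaDensity, gammaPDFReal, hx.symm.le_iff_lt, neg_mul]

lemma log_gammaDensity_div (ha : 0 < a) (ha' : 0 < a') (hr : 0 < r) (hx : 0 < x) :
    Real.log (gammaDensity a r x / gammaDensity a' r x) =
      (a - a') * Real.log (r * x) + (Real.log (Real.Gamma a') - Real.log (Real.Gamma a)) := by
  have hΓ := Real.Gamma_pos_of_pos ha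
  have hΓ' := Real.Gamma_pos_of_pos ha'
  have ratio_eq : gammaDensity a r x / gammaDensity a' r x =
      (r * x) ^ (a - a') * (Real.Gamma a' / Real.Gamma a) := by
    rw [gammaDensity_of_pos hx, gammaDensity_of_pos hx, Real.mul_rpow hr.le hx.le,
      Real.rpow_sub hr a a', Real.rpow_sub hx a a', Real.rpow_sub_one hx.ne',
      Real.rpow_sub_one hx.ne']
    field_simp
  rw [ratio_eq, Real.log_mul (by positivity) (by positivity), Real.log_rpow (mul_pos hr hx),
    Real.log_div hΓ'.ne' hΓ.ne']

lemma gammaDensity_mul_exp_mul_log (hat : 0 < a + t) (hr : 0 < r) (hx : 0 < x) :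
    gammaDensity a r x * Real.exp (t * Real.log (r * x)) =
      gammaDensity (a + t) r x * (Real.Gamma (a + t) / Real.Gamma a) := by
  have hΓ : Real.Gamma (a + t) ≠ 0 := (Real.Gamma_pos_of_pos hat).ne'
  rw [mul_comm t, ← Real.rpow_def_of_pos (mul_pos hr hx), Real.mul_rpow hr.le hx.le,
    gammaDensity_of_pos hx, gammaDensity_of_pos hx, Real.rpow_add hr, add_sub_right_comm,
    Real.rpow_add hx]
  field_simp [hΓ]

end Density

section GammaMeasure

variable {a r t : ℝ}

lemma integral_gammaMeasure {E : Type*} [NormedAddCommGroup E] [NormedSpace ℝ E]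
    (ha : 0 < a) (hr : 0 < r) (g : ℝ → E) :
    ∫ x, g x ∂gammaMeasure a r = ∫ x in Ioi 0, gammaDensity a r x • g x := by
  have toReal_gammaPDF (x : ℝ) : (gammaPDF a r x).toReal = gammaPDFReal a r x :=
    ENNReal.toReal_ofReal (gammaPDFReal_nonneg ha hr x)
  calc ∫ x, g x ∂gammaMeasure a r
      = ∫ x, gammaPDFReal a r x • g x := by
        simp_rw [← toReal_gammaPDF]
        exact integral_withDensity_eq_integral_toReal_smul
          (measurable_gammaPDFReal a r).ennreal_ofReal
          (ae_of_all _ fun _ ↦ ENNReal.ofReal_lt_top) g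
    _ = ∫ x, gammaDensity a r x • g x :=
        integral_congr_ae ((gammaDensity_ae_eq_gammaPDFReal a r).symm.smul (ae_eq_refl g))
    _ = ∫ x in Ioi 0, gammaDensity a r x • g x :=
        (setIntegral_eq_integral_of_forall_compl_eq_zero fun x hx ↦ by
          rw [gammaDensity_of_nonpos (not_lt.1 hx), zero_smul]).symm

lemma integral_gammaDensity (ha : 0 < a) (hr : 0 < r) :
    ∫ x in Ioi 0, gammaDensity a r x = 1 := by
  have := isProbabilityMeasure_gammaMeasure ha hr
  simpa using (integral_gammaMeasure ha hr fun _ ↦ (1 : ℝ)).symm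

lemma mgf_log_mul_gammaMeasure (ha : 0 < a) (hat : 0 < a + t) (hr : 0 < r) :
    mgf (fun x ↦ Real.log (r * x)) (gammaMeasure a r) t =
      Real.Gamma (a + t) / Real.Gamma a := by
  simp_rw [mgf, integral_gammaMeasure ha hr, smul_eq_mul]
  rw [setIntegral_congr_fun measurableSet_Ioi
      fun x hx ↦ gammaDensity_mul_exp_mul_log hat hr hx,
    integral_mul_const, integral_gammaDensity hat hr, one_mul]

lemma zero_mem_interior_integrableExpSet_log_mul (ha : 0 < a) (hr : 0 < r) :
    0 ∈ interior (integrableExpSet (fun x ↦ Real.log (r * x)) (gammaMeasure a r)) := by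
  have := isProbabilityMeasure_gammaMeasure ha hr
  refine mem_interior.2 ⟨Ioi (-a), fun t ht ↦ ?_, isOpen_Ioi, neg_lt_zero.2 ha⟩
  have hat : 0 < a + t := neg_lt_iff_pos_add'.1 ht
  refine mgf_pos_iff.1 ?_
  rw [mgf_log_mul_gammaMeasure ha hat hr]
  exact div_pos (Real.Gamma_pos_of_pos hat) (Real.Gamma_pos_of_pos ha)

lemma integrable_log_mul_gammaMeasure (ha : 0 < a) (hr : 0 < r) :
    Integrable (fun x ↦ Real.log (r * x)) (gammaMeasure a r) :=
  integrable_of_mem_interior_integrableExpSet (zero_mem_interior_integrableExpSet_log_mul ha hr)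

lemma integral_log_mul_gammaMeasure (ha : 0 < a) (hr : 0 < r) :
    ∫ x, Real.log (r * x) ∂gammaMeasure a r = digamma a := by
  have mgf_eq : mgf (fun x ↦ Real.log (r * x)) (gammaMeasure a r) =ᶠ[𝓝 0]
      fun t ↦ Real.Gamma (a + t) / Real.Gamma a := by
    filter_upwards [Ioi_mem_nhds (neg_lt_zero.2 ha)] with t ht
    exact mgf_log_mul_gammaMeasure ha (neg_lt_iff_pos_add'.1 ht) hr
  rw [← deriv_mgf_zero (zero_mem_interior_integrableExpSet_log_mul ha hr), mgf_eq.deriv_eq,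
    deriv_div_const, deriv_comp_const_add, add_zero, digamma]

end GammaMeasure

/-- KL divergence from Gamma(α̂, β) to Gamma(α, β):
`KL = log Γ(α) − log Γ(α̂) + (α̂ − α) ψ(α̂)`, independently of `β`. -/
theorem kl_gamma_gamma (α αh β : ℝ) (hα : 0 < α) (hαh : 0 < αh) (hβ : 0 < β) :
    ∫ x in Ioi (0 : ℝ), gammaDensity αh β x * Real.log (gammaDensity αh β x / gammaDensity α β x)
      = Real.log (Real.Gamma α) - Real.log (Real.Gamma αh) + (αh - α) * digamma αh := by
  have := isProbabilityMeasure_gammaMeasure hαh hβ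
  set c := Real.log (Real.Gamma α) - Real.log (Real.Gamma αh)
  calc ∫ x in Ioi (0 : ℝ),
        gammaDensity αh β x * Real.log (gammaDensity αh β x / gammaDensity α β x)
      = ∫ x in Ioi (0 : ℝ), gammaDensity αh β x * ((αh - α) * Real.log (β * x) + c) :=
        setIntegral_congr_fun measurableSet_Ioi fun x hx ↦
          congrArg _ (log_gammaDensity_div hαh hα hβ hx)
    _ = ∫ x, ((αh - α) * Real.log (β * x) + c) ∂gammaMeasure αh β :=
        (integral_gammaMeasure hαh hβ _).symm
    _ = (αh - α) * digamma αh + c := by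
        rw [integral_add ((integrable_log_mul_gammaMeasure hαh hβ).const_mul _)
          (integrable_const c), integral_const_mul, integral_log_mul_gammaMeasure hαh hβ,
          integral_const, probReal_univ, one_smul]
    _ = c + (αh - α) * digamma αh := add_comm _ _
end

section
/- Fix β > 0 and u ∈ (0, 1). For α > 0 let F(·; α, β) denote the Gamma(α, β) cumulative distribution function and let x_α = β^{−1} (u α Γ(α))^{1/α} be the approximate inverse CDF value. Then lim_{α → 0⁺} F(x_α; α, β) = u; that is, the approximation F^{−1}(u; α, β) ≈ β^{−1}(u α Γ(α))^{1/α} is asymptotically exact as the shape parameter α tends to 0. -/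
/-!
By the mean value theorem for integrals, the factor `e^(-βt)` can be pulled out of the CDF at some
`c ∈ [0, x]`; the remaining power integrates exactly, so `F(x; a, β) = e^(-βc) (βx)^a / Γ(a + 1)`.
The approximate quantile `x_a` is the point where `(βx)^a / Γ(a + 1) = u`. Since `a Γ(a) → 1`, the
base of `(u a Γ(a))^(1/a)` tends to `u < 1` while its exponent tends to `∞`, so `x_a → 0`. Hence
`c → 0` and `F(x_a; a, β) = u e^(-βc) → u`.
-/

open MeasureTheory Set Filter

section

open Real Topology

lemma tendsto_rpow_nhds_zero_of_abs_lt_one {ι : Type*} {l : Filter ι} {f g : ι → ℝ} {r : ℝ}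
    (hr : |r| < 1) (hf : Tendsto f l (𝓝 r)) (hg : Tendsto g l atTop) :
    Tendsto (fun i => f i ^ g i) l (𝓝 0) := by
  obtain ⟨q, hrq, hq⟩ := exists_between hr
  have hq₀ : 0 < q := (abs_nonneg r).trans_lt hrq
  have hqg : Tendsto (fun i => q ^ g i) l (𝓝 0) :=
    (tendsto_rpow_atTop_of_base_lt_one q (by linarith) hq).comp hg
  refine squeeze_zero_norm' ?_ hqg
  filter_upwards [hf.abs.eventually_le_const hrq, hg.eventually_ge_atTop 0] with i hfq hg₀
  calc ‖f i ^ g i‖ ≤ |f i| ^ g i := abs_rpow_le_abs_rpow _ _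
    _ ≤ q ^ g i := rpow_le_rpow (abs_nonneg _) hfq hg₀

lemma tendsto_self_mul_realGamma_nhds_zero :
    Tendsto (fun a : ℝ => a * Gamma a) (𝓝[≠] 0) (𝓝 1) := by
  have hGamma : Tendsto Gamma (𝓝 (0 + 1)) (𝓝 1) := by
    simpa only [zero_add, Gamma_one] using hasDerivAt_Gamma_one.continuousAt.tendsto
  exact tendsto_nhdsWithin_congr (fun _ ha => Gamma_add_one ha)
    ((hGamma.comp ((continuous_add_const 1).tendsto 0)).mono_left nhdsWithin_le_nhds)

lemma exists_integral_gammaDensity_eq {a b x : ℝ} (ha : 0 < a) (hb : 0 ≤ b) (hx : 0 ≤ x) :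
    ∃ c ∈ Icc 0 x,
      ∫ t in (0 : ℝ)..x, gammaDensity a b t = exp (-b * c) * ((b * x) ^ a / Gamma (a + 1)) := by
  have hint : IntervalIntegrable (fun t : ℝ => t ^ (a - 1)) volume 0 x :=
    intervalIntegral.intervalIntegrable_rpow' (by linarith)
  have hpos : ∀ t ∈ uIoc 0 x, 0 < t := fun t ht => (uIoc_of_le hx ▸ ht).1
  obtain ⟨c, hc, hmean⟩ := exists_eq_const_mul_intervalIntegral_of_nonneg (a := 0) (b := x)
    (f := fun t => exp (-b * t)) (by fun_prop) hint (fun t ht => rpow_nonneg (hpos t ht).le _)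
  refine ⟨c, uIcc_of_le hx ▸ hc, ?_⟩
  calc ∫ t in (0 : ℝ)..x, gammaDensity a b t
      = ∫ t in (0 : ℝ)..x, b ^ a / Gamma a * (exp (-b * t) * t ^ (a - 1)) := by
        refine intervalIntegral.integral_congr_ae (ae_of_all _ fun t ht => ?_)
        rw [gammaDensity, if_pos (hpos t ht)]
        ring
    _ = b ^ a / Gamma a * (exp (-b * c) * ∫ t in (0 : ℝ)..x, t ^ (a - 1)) := by
        rw [intervalIntegral.integral_const_mul, hmean]
    _ = b ^ a / Gamma a * (exp (-b * c) * (x ^ a / a)) := by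
        rw [integral_rpow (Or.inl (by linarith)), sub_add_cancel, zero_rpow ha.ne', sub_zero]
    _ = exp (-b * c) * ((b * x) ^ a / Gamma (a + 1)) := by
        rw [mul_rpow hb hx, Gamma_add_one ha.ne']
        ring

/-- The approximation `x_a = b⁻¹ (u a Γ(a))^(1/a)` to the `u`-quantile of the Gamma(`a`, `b`)
distribution. The shape `a` comes last because it is the variable of the limit. -/
noncomputable def gammaQuantileApprox (u b a : ℝ) : ℝ :=
  b⁻¹ * (u * a * Gamma a) ^ (1 / a)

lemma gammaQuantileApprox_nonneg {u b a : ℝ} (hu : 0 ≤ u) (hb : 0 ≤ b) (ha : 0 < a) :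
    0 ≤ gammaQuantileApprox u b a := by
  have := Gamma_pos_of_pos ha
  unfold gammaQuantileApprox
  positivity

lemma mul_gammaQuantileApprox_rpow {u b a : ℝ} (hu : 0 ≤ u) (hb : b ≠ 0) (ha : 0 < a) :
    (b * gammaQuantileApprox u b a) ^ a = u * Gamma (a + 1) := by
  have := Gamma_pos_of_pos ha
  rw [gammaQuantileApprox, mul_inv_cancel_left₀ hb, one_div, rpow_inv_rpow (by positivity) ha.ne',
    Gamma_add_one ha.ne', mul_assoc]

lemma exists_integral_gammaDensity_gammaQuantileApprox_eq {u b a : ℝ} (hu : 0 ≤ u) (hb : 0 < b)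
    (ha : 0 < a) :
    ∃ c ∈ Icc 0 (gammaQuantileApprox u b a),
      ∫ t in (0 : ℝ)..gammaQuantileApprox u b a, gammaDensity a b t = u * exp (-b * c) := by
  obtain ⟨c, hc, hF⟩ :=
    exists_integral_gammaDensity_eq ha hb.le (gammaQuantileApprox_nonneg hu hb.le ha)
  refine ⟨c, hc, ?_⟩
  rw [hF, mul_gammaQuantileApprox_rpow hu hb.ne' ha,
    mul_div_cancel_right₀ _ (Gamma_pos_of_pos (by positivity)).ne', mul_comm]

lemma tendsto_gammaQuantileApprox_nhdsGT_zero {u : ℝ} (hu : |u| < 1) (b : ℝ) :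
    Tendsto (gammaQuantileApprox u b) (𝓝[>] 0) (𝓝 0) := by
  have hbase : Tendsto (fun a : ℝ => u * a * Gamma a) (𝓝[>] 0) (𝓝 u) := by
    simpa only [mul_assoc, mul_one] using
      (tendsto_self_mul_realGamma_nhds_zero.mono_left (nhdsGT_le_nhdsNE 0)).const_mul u
  have hexp : Tendsto (fun a : ℝ => 1 / a) (𝓝[>] 0) atTop := by
    simpa only [one_div] using tendsto_inv_nhdsGT_zero (𝕜 := ℝ)
  unfold gammaQuantileApprox
  simpa only [mul_zero] using
    (tendsto_rpow_nhds_zero_of_abs_lt_one hu hbase hexp).const_mul b⁻¹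

end

/-- Asymptotic exactness of the inverse Gamma CDF approximation
`F⁻¹(u; α, β) ≈ β⁻¹ (u α Γ(α))^(1/α)` as the shape `α → 0⁺`: for fixed `β > 0` and
`u ∈ (0,1)`, the Gamma(α, β) CDF evaluated at `x_α = β⁻¹ (u α Γ(α))^(1/α)` tends to
`u` as `α → 0⁺`. -/
theorem inverse_gamma_cdf_approx (β u : ℝ) (hβ : 0 < β) (hu : u ∈ Ioo (0 : ℝ) 1) :
    Tendsto
      (fun a : ℝ =>
        ∫ t in (0 : ℝ)..(β⁻¹ * (u * a * Real.Gamma a) ^ (1 / a)), gammaDensity a β t)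
      (nhdsWithin 0 (Ioi 0)) (nhds u) := by
  have hx := tendsto_gammaQuantileApprox_nhdsGT_zero (abs_lt.mpr ⟨by linarith [hu.1], hu.2⟩) β
  choose! c hc hF using fun a (ha : 0 < a) =>
    exists_integral_gammaDensity_gammaQuantileApprox_eq hu.1.le hβ ha
  have hc_lim : Tendsto c (nhdsWithin 0 (Ioi 0)) (nhds 0) :=
    squeeze_zero' (eventually_mem_nhdsWithin.mono fun a ha => (hc a ha).1)
      (eventually_mem_nhdsWithin.mono fun a ha => (hc a ha).2) hx
  have hlim : Tendsto (fun a => u * Real.exp (-β * c a)) (nhdsWithin 0 (Ioi 0)) (nhds u) := by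
    simpa only [mul_zero, Real.exp_zero, mul_one] using (hc_lim.const_mul (-β)).rexp.const_mul u
  exact tendsto_nhdsWithin_congr (fun a ha => (hF a ha).symm) hlim
end
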